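/- For k ∈ ℕ let f_k : ℝ → ℝ be defined by f_k(x) = 2^{(k−1)/2}·(χ_{[1/2−2^{−k},1/2]}(x) − χ_{[1/2,1/2+2^{−k}]}(x)). There is an absolute constant C > 0 such that for every k ≥ 2, ∫_1^{+∞} | ∫_{1/2−2^{−k}}^{1/2+2^{−k}} f_k(y)/(x−y) dy |² dx ≤ C · 2^{−k}; in particular these tail integrals tend to 0 as k → ∞. -/

import Mathlib

open MeasureTheory

/-- The functions `f_k(x) = 2^{(k-1)/2} (χ_{[1/2-2^{-k},1/2]}(x) - χ_{[1/2,1/2+2^{-k}]}(x))`. -/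
noncomputable def f (k : ℕ) (x : ℝ) : ℝ :=
  (2 : ℝ) ^ (((k : ℝ) - 1) / 2) *
    ((Set.Icc (1/2 - (2:ℝ) ^ (-(k:ℝ))) (1/2)).indicator 1 x -
      (Set.Icc (1/2 : ℝ) (1/2 + (2:ℝ) ^ (-(k:ℝ)))).indicator 1 x)

open Filter Topology

/-!
Since `x - y ≥ x - b` for `y ≤ b < x`, the Cauchy transform of a function `g` living on `(-∞, b]` is
at most `‖g‖₁ / (x - b)`, and the square of this bound integrates to `‖g‖₁² / (a - b)` over
`[a, ∞)`. For `f k` with `k ≥ 2` the norm `‖f k‖₁` is of order `2 ^ (-k / 2)`, while `a = 1` stays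
at distance at least `1 / 4` from the support.
-/

section CauchyTransform

variable {a b x : ℝ}

theorem abs_integral_div_sub_le {μ : Measure ℝ} {g : ℝ → ℝ} (hg : Integrable g μ)
    (hb : ∀ᵐ y ∂μ, y ≤ b) (hx : b < x) :
    |∫ y, g y / (x - y) ∂μ| ≤ (∫ y, |g y| ∂μ) / (x - b) := by
  rw [← integral_div, ← Real.norm_eq_abs]
  refine norm_integral_le_of_norm_le (hg.abs.div_const (x - b)) ?_
  filter_upwards [hb] with y hy
  have hdist : x - b ≤ x - y := sub_le_sub_left hy x
  have hpos : 0 < x - b := sub_pos.2 hx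
  rw [Real.norm_eq_abs, abs_div, abs_of_pos (hpos.trans_le hdist)]
  exact div_le_div_of_nonneg_left (abs_nonneg _) hpos hdist

theorem hasDerivAt_neg_inv_sub (hx : x ≠ b) :
    HasDerivAt (fun t => -(t - b)⁻¹) ((x - b) ^ 2)⁻¹ x := by
  convert! (((hasDerivAt_id x).sub_const b).inv (sub_ne_zero.2 hx)).neg using 1
  simp [neg_div]

theorem tendsto_neg_inv_sub_atTop (b : ℝ) :
    Tendsto (fun t : ℝ => -(t - b)⁻¹) atTop (𝓝 0) := by
  simpa [sub_eq_add_neg] using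
    (tendsto_inv_atTop_zero.comp (tendsto_atTop_add_const_right atTop (-b) tendsto_id)).neg

theorem integrableOn_Ici_inv_sub_sq (hab : b < a) :
    IntegrableOn (fun x => ((x - b) ^ 2)⁻¹) (Set.Ici a) :=
  (integrableOn_Ici_iff_integrableOn_Ioi).2 <|
    integrableOn_Ioi_deriv_of_nonneg' (fun _ hx => hasDerivAt_neg_inv_sub (hab.trans_le hx).ne')
      (fun _ _ => by positivity) (tendsto_neg_inv_sub_atTop b)

theorem integral_Ici_inv_sub_sq (hab : b < a) :
    ∫ x in Set.Ici a, ((x - b) ^ 2)⁻¹ = (a - b)⁻¹ := by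
  rw [integral_Ici_eq_integral_Ioi,
    integral_Ioi_of_hasDerivAt_of_nonneg'
      (fun _ hx => hasDerivAt_neg_inv_sub (hab.trans_le hx).ne')
      (fun _ _ => by positivity) (tendsto_neg_inv_sub_atTop b)]
  ring

theorem integral_Ici_sq_integral_div_sub_le {μ : Measure ℝ} {g : ℝ → ℝ} (hg : Integrable g μ)
    (hb : ∀ᵐ y ∂μ, y ≤ b) (hab : b < a) :
    ∫ x in Set.Ici a, |∫ y, g y / (x - y) ∂μ| ^ 2 ≤ (∫ y, |g y| ∂μ) ^ 2 / (a - b) := by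
  rw [div_eq_mul_inv, ← integral_Ici_inv_sub_sq hab, ← integral_const_mul]
  refine integral_mono_of_nonneg (ae_of_all _ fun _ => by positivity)
    ((integrableOn_Ici_inv_sub_sq hab).const_mul _) ?_
  filter_upwards [ae_restrict_mem measurableSet_Ici] with x hx
  calc |∫ y, g y / (x - y) ∂μ| ^ 2
      ≤ ((∫ y, |g y| ∂μ) / (x - b)) ^ 2 := by
        gcongr
        exact abs_integral_div_sub_le hg hb (hab.trans_le hx)
    _ = (∫ y, |g y| ∂μ) ^ 2 * ((x - b) ^ 2)⁻¹ := by rw [div_pow, div_eq_mul_inv]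

end CauchyTransform

theorem two_rpow_neg_natCast_le_one_div_four {k : ℕ} (hk : 2 ≤ k) : (2 : ℝ) ^ (-(k : ℝ)) ≤ 1 / 4 :=
  calc (2 : ℝ) ^ (-(k : ℝ)) ≤ 2 ^ (-((2 : ℕ) : ℝ)) := by gcongr; norm_num
    _ = 1 / 4 := by rw [Real.rpow_neg two_pos.le, Real.rpow_natCast]; norm_num

theorem tendsto_two_rpow_neg_natCast :
    Tendsto (fun k : ℕ => (2 : ℝ) ^ (-(k : ℝ))) atTop (𝓝 0) :=
  (tendsto_rpow_atBot_of_base_gt_one 2 one_lt_two).comp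
    (tendsto_neg_atTop_atBot.comp tendsto_natCast_atTop_atTop)

theorem sq_two_rpow_half_mul_two_rpow_neg (t : ℝ) :
    ((2 : ℝ) ^ ((t - 1) / 2)) ^ 2 * 2 ^ (-t) = 1 / 2 := by
  rw [← Real.rpow_mul_natCast two_pos.le, ← Real.rpow_add two_pos,
    show (t - 1) / 2 * (2 : ℕ) + -t = -1 by push_cast; ring, Real.rpow_neg_one, one_div]

theorem abs_f_le (k : ℕ) (y : ℝ) : |f k y| ≤ (2 : ℝ) ^ (((k : ℝ) - 1) / 2) := by
  rw [f, abs_mul, abs_of_pos (by positivity)]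
  refine mul_le_of_le_one_right (by positivity) ?_
  simp only [Set.indicator_apply, Pi.one_apply]
  split_ifs <;> norm_num

theorem integrable_f (k : ℕ) : Integrable (f k) := by
  have indicator_Icc (c d : ℝ) : Integrable ((Set.Icc c d).indicator (1 : ℝ → ℝ)) :=
    (integrableOn_const (by simp)).integrable_indicator measurableSet_Icc
  exact ((indicator_Icc _ _).sub (indicator_Icc _ _)).const_mul _

theorem setIntegral_abs_f_le (k : ℕ) {s : Set ℝ} (hs : volume s < ⊤) :
    ∫ y in s, |f k y| ≤ (2 : ℝ) ^ (((k : ℝ) - 1) / 2) * volume.real s := by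
  refine (Real.le_norm_self _).trans (norm_setIntegral_le_of_norm_le_const hs fun y _ => ?_)
  simpa only [Real.norm_eq_abs, abs_abs] using abs_f_le k y

theorem sq_setIntegral_abs_f_le (k : ℕ) :
    (∫ y in Set.Icc (1/2 - (2:ℝ) ^ (-(k:ℝ))) (1/2 + (2:ℝ) ^ (-(k:ℝ))), |f k y|) ^ 2
      ≤ 2 * (2:ℝ) ^ (-(k:ℝ)) := by
  have hscale := sq_two_rpow_half_mul_two_rpow_neg k
  have hL1 := setIntegral_abs_f_le k
    (measure_Icc_lt_top (a := 1/2 - (2:ℝ) ^ (-(k:ℝ))) (b := 1/2 + (2:ℝ) ^ (-(k:ℝ))))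
  have hδ : 0 < (2:ℝ) ^ (-(k:ℝ)) := by positivity
  rw [Real.volume_real_Icc_of_le (by linarith)] at hL1
  set δ := (2:ℝ) ^ (-(k:ℝ))
  set A := (2:ℝ) ^ (((k:ℝ) - 1) / 2)
  calc (∫ y in Set.Icc (1/2 - δ) (1/2 + δ), |f k y|) ^ 2
      ≤ (A * (1/2 + δ - (1/2 - δ))) ^ 2 :=
        pow_le_pow_left₀ (integral_nonneg fun _ => abs_nonneg _) hL1 2
    _ = 4 * δ * (A ^ 2 * δ) := by ring
    _ = 2 * δ := by rw [hscale]; ring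

theorem integral_Ici_one_sq_integral_f_div_sub_le {k : ℕ} (hk : 2 ≤ k) :
    ∫ x in Set.Ici (1:ℝ),
        |∫ y in Set.Icc (1/2 - (2:ℝ) ^ (-(k:ℝ))) (1/2 + (2:ℝ) ^ (-(k:ℝ))),
            f k y / (x - y)| ^ 2
      ≤ 8 * (2:ℝ) ^ (-(k:ℝ)) := by
  have hL1 := sq_setIntegral_abs_f_le k
  have hδ := two_rpow_neg_natCast_le_one_div_four hk
  set δ := (2:ℝ) ^ (-(k:ℝ))
  have hsupp : ∀ᵐ y ∂volume.restrict (Set.Icc (1/2 - δ) (1/2 + δ)), y ≤ 1/2 + δ :=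
    (ae_restrict_mem measurableSet_Icc).mono fun _ hy => hy.2
  have hgap : 1/4 ≤ 1 - (1/2 + δ) := by linarith
  calc ∫ x in Set.Ici (1:ℝ), |∫ y in Set.Icc (1/2 - δ) (1/2 + δ), f k y / (x - y)| ^ 2
      ≤ (∫ y in Set.Icc (1/2 - δ) (1/2 + δ), |f k y|) ^ 2 / (1 - (1/2 + δ)) :=
        integral_Ici_sq_integral_div_sub_le (integrable_f k).restrict hsupp (by linarith)
    _ ≤ 2 * δ / (1/4) := by gcongr
    _ = 8 * δ := by ring

/-- There is an absolute constant `C > 0` such that for every `k ≥ 2`,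
`∫_1^∞ |∫_{1/2-2^{-k}}^{1/2+2^{-k}} f_k(y)/(x-y) dy|² dx ≤ C·2^{-k}`;
in particular these tail integrals tend to `0` as `k → ∞`. -/
theorem stmt6 :
    ∃ C : ℝ, 0 < C ∧
      (∀ k : ℕ, 2 ≤ k →
        ∫ x in Set.Ici (1:ℝ),
            |∫ y in Set.Icc (1/2 - (2:ℝ) ^ (-(k:ℝ))) (1/2 + (2:ℝ) ^ (-(k:ℝ))),
                f k y / (x - y)| ^ 2
          ≤ C * (2:ℝ) ^ (-(k:ℝ))) ∧
      Filter.Tendsto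
        (fun k : ℕ => ∫ x in Set.Ici (1:ℝ),
            |∫ y in Set.Icc (1/2 - (2:ℝ) ^ (-(k:ℝ))) (1/2 + (2:ℝ) ^ (-(k:ℝ))),
                f k y / (x - y)| ^ 2)
        Filter.atTop (nhds 0) := by
  refine ⟨8, by norm_num, fun k => integral_Ici_one_sq_integral_f_div_sub_le, ?_⟩
  have hlim : Tendsto (fun k : ℕ => 8 * (2:ℝ) ^ (-(k:ℝ))) atTop (𝓝 0) := by
    simpa using tendsto_two_rpow_neg_natCast.const_mul 8
  refine squeeze_zero' (.of_forall fun k => integral_nonneg fun x => by positivity) ?_ hlim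
  filter_upwards [eventually_ge_atTop 2] with k hk
  exact integral_Ici_one_sq_integral_f_div_sub_le hk
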